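/- Let A₁ and A₂ be n-outcome PVMs on ℂ^d with A₁ ≠ A₂. Then B(A₁,A₂) = 0. -/

import Mathlib

open scoped BigOperators Kronecker ComplexOrder Matrix

noncomputable section

/-- The positive semidefinite square root of a positive semidefinite matrix
(Mathlib's former `Matrix.PosSemidef.sqrt`, since removed, with its old definition). -/
noncomputable def Matrix.PosSemidef.sqrt {n 𝕜 : Type*} [Fintype n] [RCLike 𝕜] [DecidableEq n]
    {A : Matrix n n 𝕜} (hA : A.PosSemidef) : Matrix n n 𝕜 :=
  (hA.1.eigenvectorUnitary : Matrix n n 𝕜) *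
    Matrix.diagonal (RCLike.ofReal ∘ Real.sqrt ∘ hA.1.eigenvalues) *
    (star hA.1.eigenvectorUnitary : Matrix n n 𝕜)

namespace QProg

/-- The positive-semidefinite square root of a matrix, extended by `0` to all matrices. -/
noncomputable def matSqrt {α : Type*} [Fintype α] [DecidableEq α]
    (A : Matrix α α ℂ) : Matrix α α ℂ :=
  @dite _ A.PosSemidef (Classical.propDecidable _) (fun h => h.sqrt) (fun _ => 0)

/-- The fidelity `F(ρ,σ) = Tr √(√ρ σ √ρ)` of two (density) matrices. -/
noncomputable def fid {α : Type*} [Fintype α] [DecidableEq α]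
    (ρ σ : Matrix α α ℂ) : ℝ :=
  ((matSqrt (matSqrt ρ * σ * matSqrt ρ)).trace).re

/-- A density matrix: positive semidefinite with unit trace. -/
def IsDensity {α : Type*} [Fintype α] [DecidableEq α] (ρ : Matrix α α ℂ) : Prop :=
  ρ.PosSemidef ∧ ρ.trace = 1

/-- An `n`-outcome POVM: positive semidefinite effects summing to the identity. -/
def IsPOVM {α : Type*} [Fintype α] [DecidableEq α] {n : ℕ}
    (E : Fin n → Matrix α α ℂ) : Prop :=
  (∀ i, (E i).PosSemidef) ∧ ∑ i, E i = 1

/-- The outcome distribution `p^E_ρ(i) = Tr[E(i) ρ]`. -/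
noncomputable def outDist {α : Type*} [Fintype α] [DecidableEq α] {n : ℕ}
    (E : Fin n → Matrix α α ℂ) (ρ : Matrix α α ℂ) (i : Fin n) : ℝ :=
  ((E i * ρ).trace).re

/-- The Bhattacharyya coefficient `B(p,q) = ∑ᵢ √(p i) √(q i)`. -/
noncomputable def bhat {n : ℕ} (p q : Fin n → ℝ) : ℝ :=
  ∑ i, Real.sqrt (p i) * Real.sqrt (q i)

/-- `B(E₁,E₂)`: infimum of `B(p^{E₁}_{ρ₁}, p^{E₂}_{ρ₂}) / F(ρ₁,ρ₂)` over pairs of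
density matrices with nonvanishing fidelity. -/
noncomputable def obsB {α : Type*} [Fintype α] [DecidableEq α] {n : ℕ}
    (E₁ E₂ : Fin n → Matrix α α ℂ) : ℝ :=
  sInf { r : ℝ | ∃ ρ₁ ρ₂ : Matrix α α ℂ, IsDensity ρ₁ ∧ IsDensity ρ₂ ∧
    fid ρ₁ ρ₂ ≠ 0 ∧ r = bhat (outDist E₁ ρ₁) (outDist E₂ ρ₂) / fid ρ₁ ρ₂ }

/-- A post-processing from `n` outcomes to `m` outcomes. -/
def IsPostProc {n m : ℕ} (lam : Fin n → Fin m → ℝ) : Prop :=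
  (∀ i y, 0 ≤ lam i y) ∧ ∀ i, ∑ y, lam i y = 1

/-- The action `(λ⋆E)(y) = ∑ᵢ λ(i|y) E(i)` of a post-processing on a POVM. -/
noncomputable def ppStar {α : Type*} [Fintype α] [DecidableEq α] {n m : ℕ}
    (lam : Fin n → Fin m → ℝ) (E : Fin n → Matrix α α ℂ) (y : Fin m) :
    Matrix α α ℂ :=
  ∑ i, (lam i y : ℂ) • E i

/-- The action `(λ⋆p)(y) = ∑ᵢ λ(i|y) p(i)` of a post-processing on a probability vector. -/
noncomputable def ppStarVec {n m : ℕ} (lam : Fin n → Fin m → ℝ) (p : Fin n → ℝ)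
    (y : Fin m) : ℝ :=
  ∑ i, lam i y * p i

/-- A probability vector on `{1,…,n}`. -/
def IsProbVec {n : ℕ} (p : Fin n → ℝ) : Prop :=
  (∀ i, 0 ≤ p i) ∧ ∑ i, p i = 1

/-- `F(λ₁,λ₂)`: infimum of `B(λ₁⋆p, λ₂⋆p)` over probability vectors `p`. -/
noncomputable def ppF {n m : ℕ} (lam₁ lam₂ : Fin n → Fin m → ℝ) : ℝ :=
  sInf { r : ℝ | ∃ p : Fin n → ℝ, IsProbVec p ∧
    r = bhat (ppStarVec lam₁ p) (ppStarVec lam₂ p) }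

/-- A PVM (sharp observable): a POVM all of whose effects are projections. -/
def IsPVM {α : Type*} [Fintype α] [DecidableEq α] {n : ℕ}
    (E : Fin n → Matrix α α ℂ) : Prop :=
  IsPOVM E ∧ ∀ i, E i * E i = E i

theorem sqrt_psd {d : ℕ} {A : Matrix (Fin d) (Fin d) ℂ} (hA : A.PosSemidef) :
    hA.sqrt.PosSemidef := by
  unfold Matrix.PosSemidef.sqrt
  refine Matrix.PosSemidef.mul_mul_conjTranspose_same (Matrix.posSemidef_diagonal_iff.2 ?_) _
  intro i
  simp

theorem sqrt_mul_sqrt {d : ℕ} {A : Matrix (Fin d) (Fin d) ℂ} (hA : A.PosSemidef) :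
    hA.sqrt * hA.sqrt = A := by
  have h := hA.1.spectral_theorem
  have hU : (star hA.1.eigenvectorUnitary : Matrix (Fin d) (Fin d) ℂ) *
      (hA.1.eigenvectorUnitary : Matrix (Fin d) (Fin d) ℂ) = 1 :=
    Unitary.coe_star_mul_self hA.1.eigenvectorUnitary
  rw [Unitary.conjStarAlgAut_apply] at h
  conv_rhs => rw [h]
  unfold Matrix.PosSemidef.sqrt
  simp only [Matrix.mul_assoc]
  rw [← Matrix.mul_assoc (star hA.1.eigenvectorUnitary : Matrix (Fin d) (Fin d) ℂ), hU,
    Matrix.one_mul, ← Matrix.mul_assoc (Matrix.diagonal _), Matrix.diagonal_mul_diagonal]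
  congr 3
  funext i
  simp only [Function.comp]
  have := Real.mul_self_sqrt (hA.eigenvalues_nonneg i)
  rw [← RCLike.ofReal_mul, this]

theorem matSqrt_psd {d : ℕ} (A : Matrix (Fin d) (Fin d) ℂ) : (matSqrt A).PosSemidef := by
  unfold matSqrt
  split_ifs with h
  · exact sqrt_psd h
  · exact Matrix.PosSemidef.zero

theorem matSqrt_mul {d : ℕ} {A : Matrix (Fin d) (Fin d) ℂ} (h : A.PosSemidef) :
    matSqrt A * matSqrt A = A := by
  unfold matSqrt
  rw [dif_pos h]
  exact sqrt_mul_sqrt h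

theorem fid_nonneg {d : ℕ} (ρ σ : Matrix (Fin d) (Fin d) ℂ) : 0 ≤ fid ρ σ :=
  (Complex.le_def.1 (matSqrt_psd _).trace_nonneg).1

theorem trace_zero_of_fid {d : ℕ} {ρ σ : Matrix (Fin d) (Fin d) ℂ} (hρ : ρ.PosSemidef)
    (hσ : σ.PosSemidef) (h : fid ρ σ = 0) : (ρ * σ).trace = 0 := by
  have hM : (matSqrt ρ * σ * matSqrt ρ).PosSemidef := by
    have := hσ.mul_mul_conjTranspose_same (matSqrt ρ)
    rwa [(matSqrt_psd ρ).1.eq] at this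
  have hp := matSqrt_psd (matSqrt ρ * σ * matSqrt ρ)
  have h0 : (matSqrt (matSqrt ρ * σ * matSqrt ρ)).trace = 0 := by
    apply Complex.ext
    · exact h
    · exact (Complex.le_def.1 hp.trace_nonneg).2.symm
  have h1 := hp.trace_eq_zero_iff.1 h0
  have h2 := matSqrt_mul hM
  rw [h1, Matrix.zero_mul] at h2
  have h3 : (matSqrt ρ * σ * matSqrt ρ).trace = 0 := by rw [← h2]; simp
  rw [Matrix.trace_mul_comm, ← Matrix.mul_assoc, matSqrt_mul hρ] at h3
  exact h3

theorem trace_proj {d : ℕ} {P Q : Matrix (Fin d) (Fin d) ℂ} (hP : P.IsHermitian)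
    (hQ : Q.IsHermitian) (hPP : P * P = P) (hQQ : Q * Q = Q) :
    (P * Q).trace = ((P * Q)ᴴ * (P * Q)).trace := by
  rw [Matrix.conjTranspose_mul, hP.eq, hQ.eq, Matrix.mul_assoc, ← Matrix.mul_assoc P, hPP,
    Matrix.trace_mul_comm Q, Matrix.mul_assoc, hQQ]

theorem pvm_orth {d n : ℕ} {A : Fin n → Matrix (Fin d) (Fin d) ℂ} (hA : IsPVM A) {i k : Fin n}
    (hik : k ≠ i) : ((A k * A i).trace).re = 0 := by
  obtain ⟨⟨hp, hs⟩, hpr⟩ := hA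
  have hnn : ∀ k, 0 ≤ ((A k * A i).trace).re := by
    intro k
    rw [trace_proj (hp k).1 (hp i).1 (hpr k) (hpr i)]
    exact (Complex.le_def.1 (Matrix.posSemidef_conjTranspose_mul_self _).trace_nonneg).1
  have hsum : ∑ k, ((A k * A i).trace).re = ((A i * A i).trace).re := by
    rw [← Complex.re_sum, ← Matrix.trace_sum, ← Finset.sum_mul, hs, Matrix.one_mul, hpr]
  rw [← Finset.add_sum_erase _ _ (Finset.mem_univ i)] at hsum
  have h0 : ∑ k ∈ Finset.univ.erase i, ((A k * A i).trace).re = 0 := by linarith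
  exact (Finset.sum_eq_zero_iff_of_nonneg (fun k _ => hnn k)).1 h0 k (by simp [hik])

theorem normalize {d : ℕ} {P : Matrix (Fin d) (Fin d) ℂ} (hP : P.PosSemidef) (h0 : P ≠ 0) :
    ∃ c : ℝ, 0 < c ∧ IsDensity ((c : ℂ) • P) := by
  have hn := Complex.le_def.1 hP.trace_nonneg
  have hne : P.trace ≠ 0 := fun h => h0 (hP.trace_eq_zero_iff.1 h)
  have htr : P.trace = (P.trace.re : ℂ) := Complex.ext rfl (by simpa using hn.2.symm)
  have hre : P.trace.re ≠ 0 := fun h => hne (by rw [htr, h]; simp)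
  have hpos : 0 < P.trace.re := lt_of_le_of_ne (by simpa using hn.1) (Ne.symm hre)
  refine ⟨(P.trace.re)⁻¹, inv_pos.2 hpos, hP.smul ?_, ?_⟩
  · exact_mod_cast (inv_pos.2 hpos).le
  · rw [Matrix.trace_smul, smul_eq_mul]
    nth_rewrite 2 [htr]
    rw [← Complex.ofReal_mul, inv_mul_cancel₀ hre, Complex.ofReal_one]

theorem outDist_smul {d n : ℕ} {A : Fin n → Matrix (Fin d) (Fin d) ℂ} (hA : IsPVM A) {i k : Fin n}
    (hik : k ≠ i) (c : ℝ) : outDist A ((c : ℂ) • A i) k = 0 := by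
  unfold outDist
  rw [Matrix.mul_smul, Matrix.trace_smul, smul_eq_mul, Complex.re_ofReal_mul, pvm_orth hA hik,
    mul_zero]

/-- Example 1: `B(A₁,A₂) = 0` for unequal PVMs. -/
theorem obsB_eq_zero_of_ne_pvm {d n : ℕ}
    (A₁ A₂ : Fin n → Matrix (Fin d) (Fin d) ℂ)
    (hA₁ : IsPVM A₁) (hA₂ : IsPVM A₂) (hne : A₁ ≠ A₂) :
    obsB A₁ A₂ = 0 := by
  obtain ⟨i, j, hij, hAB⟩ : ∃ i j, i ≠ j ∧ A₁ i * A₂ j ≠ 0 := by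
    by_contra! hc
    apply hne
    funext i
    have e1 : A₁ i = A₁ i * A₂ i := by
      calc A₁ i = A₁ i * ∑ j, A₂ j := by rw [hA₂.1.2, Matrix.mul_one]
        _ = ∑ j, A₁ i * A₂ j := Finset.mul_sum _ _ _
        _ = A₁ i * A₂ i :=
          Finset.sum_eq_single i (fun j _ hj => hc i j (Ne.symm hj)) (by simp)
    have e2 : A₂ i = A₁ i * A₂ i := by
      calc A₂ i = (∑ j, A₁ j) * A₂ i := by rw [hA₁.1.2, Matrix.one_mul]
        _ = ∑ j, A₁ j * A₂ i := Finset.sum_mul _ _ _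
        _ = A₁ i * A₂ i :=
          Finset.sum_eq_single i (fun j _ hj => hc j i hj) (by simp)
    rw [e1, ← e2]
  have hP := hA₁.1.1 i
  have hQ := hA₂.1.1 j
  obtain ⟨a, ha, hρ⟩ := normalize hP (fun h => hAB (by rw [h, Matrix.zero_mul]))
  obtain ⟨b, hb, hσ⟩ := normalize hQ (fun h => hAB (by rw [h, Matrix.mul_zero]))
  unfold obsB
  apply le_antisymm
  · refine csInf_le ⟨0, ?_⟩ ⟨(a : ℂ) • A₁ i, (b : ℂ) • A₂ j, hρ, hσ, ?_, ?_⟩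
    · rintro r ⟨ρ₁, ρ₂, -, -, -, rfl⟩
      exact div_nonneg (Finset.sum_nonneg fun _ _ => by positivity) (fid_nonneg _ _)
    · intro hf
      have h := trace_zero_of_fid hρ.1 hσ.1 hf
      rw [Matrix.smul_mul, Matrix.mul_smul, Matrix.trace_smul, Matrix.trace_smul, smul_eq_mul,
        smul_eq_mul, mul_eq_zero, mul_eq_zero] at h
      rcases h with h | h | h
      · exact ha.ne' (by exact_mod_cast h)
      · exact hb.ne' (by exact_mod_cast h)
      · rw [trace_proj hP.1 hQ.1 (hA₁.2 i) (hA₂.2 j),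
          Matrix.trace_conjTranspose_mul_self_eq_zero_iff] at h
        exact hAB h
    · have : bhat (outDist A₁ ((a : ℂ) • A₁ i)) (outDist A₂ ((b : ℂ) • A₂ j)) = 0 := by
        unfold bhat
        refine Finset.sum_eq_zero fun k _ => ?_
        by_cases hk : k = i
        · subst hk
          rw [outDist_smul hA₂ hij, Real.sqrt_zero, mul_zero]
        · rw [outDist_smul hA₁ hk, Real.sqrt_zero, zero_mul]
      rw [this, zero_div]
  · apply Real.sInf_nonneg
    rintro r ⟨ρ₁, ρ₂, -, -, -, rfl⟩
    exact div_nonneg (Finset.sum_nonneg fun _ _ => by positivity) (fid_nonneg _ _)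
end QProg
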